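/- arXiv:2209.09160 — 2 statements merged into one kernel-verified Lean document; each statement's English description precedes it below -/
import Mathlib

section
/- Let σ be a finite Borel measure on the circle 𝕋 = ℝ/ℤ that is NOT mutually singular with respect to the Haar probability measure m (i.e., the absolutely continuous part of σ in its Lebesgue decomposition with respect to m is nonzero). Then there exist real numbers a > 0 and b > 0 and an integer P₀ such that for every integer P ≥ P₀, the number of indices k ∈ {0, …, P−1} with σ(I_{k,P}) > b/P is strictly greater than a·P. -/
/-!
If `σ` is not singular with respect to `m`, the infimum `σ ⊓ m` in the lattice of measures is
nonzero. It lies below `m`, so it gives each of the `P` arcs mass at most `1/P`. The arcs of mass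
at most `b/P` carry at most `b` altogether, and for `b` half the total mass of `σ ⊓ m` a
positive proportion of the arcs must have larger mass; these are big for `σ` because `σ ⊓ m ≤ σ`.
-/

open MeasureTheory Filter Set
open scoped ENNReal

/-- The arc `I_{k,P}` of the circle `ℝ/ℤ`: the image of `[k/P, (k+1)/P)` under the
quotient map `ℝ → ℝ/ℤ`. -/
noncomputable def arc (k P : ℕ) : Set (AddCircle (1 : ℝ)) :=
  (fun x : ℝ => (x : AddCircle (1 : ℝ))) '' Set.Ico ((k : ℝ) / P) (((k : ℝ) + 1) / P)

open Finset in
theorem sum_le_card_nsmul_add_card_filter_lt_nsmul {ι M : Type*} [AddCommMonoid M] [LinearOrder M]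
    [IsOrderedAddMonoid M] {s : Finset ι} {f : ι → M} {r t : M} (ht : 0 ≤ t)
    (hf : ∀ i ∈ s, f i ≤ r) :
    ∑ i ∈ s, f i ≤ #s • t + #{i ∈ s | t < f i} • r := by
  rw [← sum_filter_not_add_sum_filter s (t < f ·)]
  gcongr ?_ + ?_
  · calc ∑ i ∈ s with ¬ t < f i, f i
        ≤ #{i ∈ s | ¬ t < f i} • t :=
          sum_le_card_nsmul _ _ _ fun i hi ↦ not_lt.1 (mem_filter.1 hi).2
      _ ≤ #s • t := nsmul_le_nsmul_left ht (card_filter_le _ _)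
  · exact sum_le_card_nsmul _ _ _ fun i hi ↦ hf i (mem_filter.1 hi).1

theorem inf_ne_zero_of_not_mutuallySingular {α : Type*} [MeasurableSpace α] {μ ν : Measure α}
    (h : ¬ μ.MutuallySingular ν) : μ ⊓ ν ≠ 0 :=
  fun h0 ↦ h (Measure.mutuallySingular_of_disjoint (disjoint_iff.2 h0))

open Finset in
theorem card_filter_measureReal_le_ncard {α : Type*} [MeasurableSpace α] {μ ν : Measure α}
    (hμν : μ ≤ ν) {t : ℝ} (ht : 0 ≤ t) (A : ℕ → Set α) (n : ℕ) :
    #{k ∈ range n | t < μ.real (A k)} ≤ {k : ℕ | k < n ∧ ENNReal.ofReal t < ν (A k)}.ncard := by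
  rw [← Set.ncard_coe_finset]
  refine Set.ncard_le_ncard (fun k hk ↦ ?_) ((Set.finite_lt_nat n).subset fun k hk ↦ hk.1)
  obtain ⟨hkn, hk⟩ := mem_filter.1 hk
  have hlt : ENNReal.ofReal t < μ (A k) :=
    (ENNReal.ofReal_lt_ofReal_iff (ht.trans_lt hk)).2 hk |>.trans_le ENNReal.ofReal_toReal_le
  exact ⟨mem_range.1 hkn, hlt.trans_le (hμν _)⟩

theorem lipschitzWith_one_coe_addCircle (T : ℝ) :
    LipschitzWith 1 ((↑) : ℝ → AddCircle T) :=
  LipschitzWith.of_dist_le_mul fun x y ↦ by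
    rw [NNReal.coe_one, one_mul, dist_eq_norm, dist_eq_norm, ← AddCircle.coe_sub]
    exact QuotientAddGroup.norm_mk_le_norm

theorem volume_image_coe_Icc_le (T : ℝ) [Fact (0 < T)] (x y : ℝ) :
    volume (((↑) : ℝ → AddCircle T) '' Icc x y) ≤ ENNReal.ofReal (y - x) := by
  have hball : ((↑) : ℝ → AddCircle T) '' Icc x y ⊆
      Metric.closedBall (((x + y) / 2 : ℝ) : AddCircle T) ((y - x) / 2) := by
    rw [Real.Icc_eq_closedBall, ← mapsTo_iff_image_subset]
    simpa only [NNReal.coe_one, one_mul] using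
      (lipschitzWith_one_coe_addCircle T).mapsTo_closedBall ((x + y) / 2) ((y - x) / 2)
  calc volume (((↑) : ℝ → AddCircle T) '' Icc x y)
      ≤ ENNReal.ofReal (min T (2 * ((y - x) / 2))) := by
        rw [← AddCircle.volume_closedBall]
        exact measure_mono hball
    _ ≤ ENNReal.ofReal (y - x) :=
        ENNReal.ofReal_le_ofReal ((min_le_right _ _).trans_eq (by ring))

theorem volume_arc_le (k P : ℕ) : volume (arc k P) ≤ ENNReal.ofReal (1 / P) :=
  calc volume (arc k P)
      ≤ volume (((↑) : ℝ → AddCircle (1 : ℝ)) '' Icc ((k : ℝ) / P) ((k + 1) / P)) :=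
        measure_mono (image_mono Ico_subset_Icc_self)
    _ ≤ ENNReal.ofReal ((k + 1) / P - k / P) := volume_image_coe_Icc_le 1 _ _
    _ = ENNReal.ofReal (1 / P) := by ring_nf

theorem biUnion_range_arc_eq_univ {P : ℕ} (hP : 0 < P) : ⋃ k ∈ Finset.range P, arc k P = univ := by
  have hIco : Ico (0 : ℝ) 1 ⊆ ⋃ k ∈ Finset.range P, Ico ((k : ℝ) / P) ((k + 1) / P) := by
    simpa [hP.ne'] using Ico_subset_biUnion_Ico P fun k ↦ (k : ℝ) / P
  refine univ_subset_iff.1 ?_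
  calc univ = ((↑) : ℝ → AddCircle (1 : ℝ)) '' Ico 0 1 := by
        simpa using (AddCircle.coe_image_Ico_eq (1 : ℝ) 0).symm
    _ ⊆ ((↑) : ℝ → AddCircle (1 : ℝ)) ''
          ⋃ k ∈ Finset.range P, Ico ((k : ℝ) / P) ((k + 1) / P) := image_mono hIco
    _ = ⋃ k ∈ Finset.range P, arc k P := by simp only [image_iUnion₂, arc]

section BigArcs

open Finset

variable {μ : Measure (AddCircle (1 : ℝ))}

theorem measureReal_arc_le (hμ : μ ≤ volume) (k P : ℕ) : μ.real (arc k P) ≤ 1 / P :=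
  ENNReal.toReal_le_of_le_ofReal (by positivity) ((hμ _).trans (volume_arc_le k P))

theorem sub_mul_le_card_filter_arc (hμ : μ ≤ volume) {b : ℝ} (hb : 0 ≤ b) (P : ℕ) :
    (μ.real univ - b) * P ≤ #{k ∈ range P | b / P < μ.real (arc k P)} := by
  rcases P.eq_zero_or_pos with rfl | hP
  · simp
  have hP' : (0 : ℝ) < P := Nat.cast_pos.2 hP
  have key : μ.real univ ≤ b + #{k ∈ range P | b / P < μ.real (arc k P)} / P :=
    calc μ.real univ
        ≤ ∑ k ∈ range P, μ.real (arc k P) := by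
          rw [← biUnion_range_arc_eq_univ hP]
          exact measureReal_biUnion_finset_le _ _
      _ ≤ #(range P) • (b / P) + #{k ∈ range P | b / P < μ.real (arc k P)} • (1 / (P : ℝ)) :=
          sum_le_card_nsmul_add_card_filter_lt_nsmul (by positivity)
            fun k _ ↦ measureReal_arc_le hμ k P
      _ = b + #{k ∈ range P | b / P < μ.real (arc k P)} / P := by
          rw [card_range, nsmul_eq_mul, nsmul_eq_mul, mul_div_cancel₀ _ hP'.ne', mul_one_div]
  rwa [← le_div_iff₀ hP', sub_le_iff_le_add']

end BigArcs

theorem not_singular_implies_many_big_arcs_general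
    (σ : Measure (AddCircle (1 : ℝ))) (h : ¬ σ.MutuallySingular volume) :
    ∃ a b : ℝ, 0 < a ∧ 0 < b ∧ ∀ P : ℕ, 0 < P →
      a * (P : ℝ) <
        (({k : ℕ | k < P ∧ ENNReal.ofReal (b / P) < σ (arc k P)}.ncard : ℝ)) := by
  let μ := σ ⊓ (volume : Measure (AddCircle (1 : ℝ)))
  have hμm : μ ≤ volume := inf_le_right
  have : IsFiniteMeasure μ := isFiniteMeasure_of_le volume hμm
  have : NeZero μ := ⟨inf_ne_zero_of_not_mutuallySingular h⟩
  have hc : 0 < μ.real univ := measureReal_univ_pos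
  refine ⟨μ.real univ / 4, μ.real univ / 2, by positivity, by positivity, fun P hP ↦ ?_⟩
  calc μ.real univ / 4 * P
      < (μ.real univ - μ.real univ / 2) * P := by gcongr; linarith
    _ ≤ Finset.card {k ∈ Finset.range P | μ.real univ / 2 / P < μ.real (arc k P)} :=
        sub_mul_le_card_filter_arc hμm (by positivity) P
    _ ≤ {k : ℕ | k < P ∧ ENNReal.ofReal (μ.real univ / 2 / P) < σ (arc k P)}.ncard :=
        Nat.cast_le.2 (card_filter_measureReal_le_ncard inf_le_left (by positivity) _ P)

/-- If a finite Borel measure `σ` on the circle is *not* mutually singular with respect to Haar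
measure, then there are `a, b > 0` and `P₀` such that for all `P ≥ P₀`, the number of `k < P`
with `σ(I_{k,P}) > b/P` is strictly greater than `a·P`. -/
theorem not_singular_implies_many_big_arcs
    (σ : Measure (AddCircle (1 : ℝ))) [IsFiniteMeasure σ]
    (h : ¬ σ.MutuallySingular volume) :
    ∃ a b : ℝ, 0 < a ∧ 0 < b ∧ ∃ P₀ : ℕ, ∀ P : ℕ, P₀ ≤ P →
      a * (P : ℝ) <
        (({k : ℕ | k < P ∧ ENNReal.ofReal (b / P) < σ (arc k P)}.ncard : ℝ)) := by
  obtain ⟨a, b, ha, hb, hab⟩ := not_singular_implies_many_big_arcs_general σ h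
  exact ⟨a, b, ha, hb, 1, hab⟩
end

section
/- Let (X, μ) and (Y, ν) be probability spaces, S an automorphism of (X, μ) and T an automorphism of (Y, ν), and let (m_j) be a strictly increasing sequence of natural numbers such that: (a) μ(A Δ S^{m_j} A) → 0 for every measurable A ⊆ X; (b) for every measurable B ⊆ Y, 4·ν(B ∩ T^{m_j} B ∩ T^{3 m_j} B) → ν(B) + ν(B)² + 2·ν(B)³; (c) for every measurable B ⊆ Y, ν(B ∩ T^{−m_j} B ∩ T^{−3 m_j} B) → ν(B)². Assume moreover that there exists a measurable set A₀ ⊆ Y with ν(A₀) = 1/4. Let R = S × T be the automorphism of (X × Y, μ ⊗ ν) given by R(x, y) = (S x, T y). Then R is not conjugate to its inverse: there is no automorphism Φ of (X × Y, μ ⊗ ν) such that Φ(R(p)) = R⁻¹(Φ(p)) for (μ ⊗ ν)-almost every p ∈ X × Y. -/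
open MeasureTheory Filter
open scoped ENNReal symmDiff

/-!
Write `R = S × T` and, for measurable `D ⊆ X × Y`, let `q x = ν(Dₓ)`, where `Dₓ` is the fiber of
`D` over `x`. Since `S` is rigid along `(m_j)`, only `T` is felt in the limit:
`(μ ⊗ ν)(D ∩ R^{m_j} D ∩ R^{3 m_j} D) → ∫ (q + q² + 2q³) / 4 dμ`, whereas for `R⁻¹` the limit is
`∫ q² dμ`. If `Φ` intertwines `R` and `R⁻¹` and `D = Φ⁻¹(X × A)`, where `a = ν(A)`, the two limits
are exchanged: `∫ (q + q² + 2q³) / 4 dμ = a²` and `∫ q² dμ = (a + a² + 2a³) / 4`, while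
`∫ q dμ = a`. Since `q + q² ≤ q + q² + 2q³`, this gives `a + (a + a² + 2a³) / 4 ≤ 4a²`, which is
false for `0 < a < 1 / 3`.
-/

section TendstoIdWeakly

variable {ι α : Type*} {mα : MeasurableSpace α} {μ : Measure α} {s t : ι → α → α} {l : Filter ι}

theorem tendsto_measureReal_symmDiff_preimage_iUnion [IsFiniteMeasure μ]
    (hs : ∀ j, MeasurePreserving (s j) μ μ) {f : ℕ → Set α}
    (hf : Pairwise (Function.onFun Disjoint f)) (hfm : ∀ i, MeasurableSet (f i))
    (h : ∀ i, Tendsto (fun j => μ.real (f i ∆ (s j ⁻¹' f i))) l (nhds 0)) :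
    Tendsto (fun j => μ.real ((⋃ i, f i) ∆ (s j ⁻¹' ⋃ i, f i))) l (nhds 0) := by
  have hbound : ∀ i j, μ.real (f i ∆ (s j ⁻¹' f i)) ≤ 2 * μ.real (f i) := fun i j => by
    calc μ.real (f i ∆ (s j ⁻¹' f i))
        ≤ μ.real (f i ∪ s j ⁻¹' f i) := measureReal_mono Set.symmDiff_subset_union
      _ ≤ μ.real (f i) + μ.real (s j ⁻¹' f i) := measureReal_union_le _ _
      _ = 2 * μ.real (f i) := by
        rw [(hs j).measureReal_preimage (hfm i).nullMeasurableSet, two_mul]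
  have hsum : Summable fun i => 2 * μ.real (f i) :=
    (summable_measure_toReal hfm hf).mul_left 2
  have hle : ∀ j, μ.real ((⋃ i, f i) ∆ (s j ⁻¹' ⋃ i, f i)) ≤
      ∑' i, μ.real (f i ∆ (s j ⁻¹' f i)) := fun j => by
    have hsum_j := hsum.of_nonneg_of_le (fun i => measureReal_nonneg) (hbound · j)
    refine ENNReal.toReal_le_of_le_ofReal (tsum_nonneg fun i => measureReal_nonneg) ?_
    rw [ENNReal.ofReal_tsum_of_nonneg (fun i => measureReal_nonneg) hsum_j, Set.preimage_iUnion]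
    simp only [measureReal_def, ENNReal.ofReal_toReal (measure_ne_top μ _)]
    exact (measure_mono Set.iUnion_symmDiff_iUnion_subset).trans (measure_iUnion_le _)
  refine squeeze_zero (fun j => measureReal_nonneg) hle ?_
  simpa using tendsto_tsum_of_dominated_convergence hsum h
    (Eventually.of_forall fun j i => by simpa [abs_of_nonneg] using hbound i j)

/-- The maps `s j` converge to the identity along `l` in the weak topology of `(α, μ)`. The map `S`
is rigid along `(m_j)` when this holds for the iterates `S^[m j]`. The definition uses preimages;
for automorphisms images give the same notion, see `TendstoIdWeakly.of_leftInverse`. -/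
def TendstoIdWeakly (μ : Measure α) (s : ι → α → α) (l : Filter ι) : Prop :=
  ∀ A, MeasurableSet A → Tendsto (fun j => μ.real (A ∆ (s j ⁻¹' A))) l (nhds 0)

namespace TendstoIdWeakly

theorem of_leftInverse (ht : ∀ j, MeasurePreserving (t j) μ μ) (hs : ∀ j, Measurable (s j))
    (hst : ∀ j, Function.LeftInverse (s j) (t j)) (h : TendstoIdWeakly μ s l) :
    TendstoIdWeakly μ t l := by
  intro A hA
  refine (h A hA).congr fun j => ?_
  rw [← (ht j).measureReal_preimage (hA.symmDiff (hs j hA)).nullMeasurableSet,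
    Set.preimage_symmDiff, ← Set.preimage_comp, (hst j).comp_eq_id, Set.preimage_id, symmDiff_comm]

theorem comp [IsFiniteMeasure μ] (ht : ∀ j, MeasurePreserving (t j) μ μ)
    (hs' : TendstoIdWeakly μ s l) (hs : ∀ j, Measurable (s j)) (ht' : TendstoIdWeakly μ t l) :
    TendstoIdWeakly μ (fun j => s j ∘ t j) l := by
  intro A hA
  refine squeeze_zero (fun j => measureReal_nonneg) (fun j => ?_)
    (by simpa using (ht' A hA).add (hs' A hA))
  calc μ.real (A ∆ (s j ∘ t j ⁻¹' A))
      ≤ μ.real (A ∆ (t j ⁻¹' A)) + μ.real (t j ⁻¹' (A ∆ (s j ⁻¹' A))) :=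
        measureReal_symmDiff_le _
    _ = μ.real (A ∆ (t j ⁻¹' A)) + μ.real (A ∆ (s j ⁻¹' A)) := by
        rw [(ht j).measureReal_preimage (hA.symmDiff (hs j hA)).nullMeasurableSet]

theorem iterate_mul [IsFiniteMeasure μ] {S : α → α} (hS : MeasurePreserving S μ μ) {m : ι → ℕ}
    (h : TendstoIdWeakly μ (fun j => S^[m j]) l) (k : ℕ) :
    TendstoIdWeakly μ (fun j => S^[k * m j]) l := by
  induction k with
  | zero => simp [TendstoIdWeakly, tendsto_const_nhds]
  | succ k ih =>
    simp only [add_one_mul, Function.iterate_add]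
    exact ih.comp (fun j => hS.iterate (m j)) (fun j => hS.measurable.iterate _) h

theorem of_isPiSystem [IsFiniteMeasure μ] {C : Set (Set α)}
    (hgen : mα = MeasurableSpace.generateFrom C) (hC : IsPiSystem C)
    (hs : ∀ j, MeasurePreserving (s j) μ μ)
    (h : ∀ A ∈ C, Tendsto (fun j => μ.real (A ∆ (s j ⁻¹' A))) l (nhds 0)) :
    TendstoIdWeakly μ s l := by
  intro A hA
  induction A, hA using MeasurableSpace.induction_on_inter hgen hC with
  | empty => simp [tendsto_const_nhds]
  | basic A hA => exact h A hA
  | compl A _ ih => simpa only [Set.preimage_compl, compl_symmDiff_compl] using ih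
  | iUnion f hf hfm ih => exact tendsto_measureReal_symmDiff_preimage_iUnion hs hf hfm ih

theorem prodMap_id {β : Type*} [MeasurableSpace β] {ν : Measure β} [IsFiniteMeasure μ]
    [IsFiniteMeasure ν] (hs : ∀ j, MeasurePreserving (s j) μ μ) (h : TendstoIdWeakly μ s l) :
    TendstoIdWeakly (μ.prod ν) (fun j => Prod.map (s j) (id : β → β)) l := by
  refine of_isPiSystem generateFrom_prod.symm isPiSystem_prod
    (fun j => (hs j).prod (MeasurePreserving.id ν)) ?_
  rintro _ ⟨A, hA, B, -, rfl⟩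
  have hrect : ∀ j, (A ×ˢ B) ∆ (Prod.map (s j) id ⁻¹' A ×ˢ B) = (A ∆ (s j ⁻¹' A)) ×ˢ B := by
    intro j
    ext ⟨x, y⟩
    simp only [Set.mem_symmDiff, Set.mem_prod, Set.mem_preimage, Prod.map_apply, id_eq]
    tauto
  simpa only [hrect, measureReal_prod_prod, zero_mul] using (h A hA).mul_const (ν.real B)

end TendstoIdWeakly

end TendstoIdWeakly

section DoubleReturn

variable {α : Type*}

/-- The points of `D` which `a` and `b` both bring back to `D`. The set
`D ∩ g^n D ∩ g^{3n} D` is obtained for `a = g^{-n}` and `b = g^{-3n}`. -/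
def doubleReturn (a b : α → α) (D : Set α) : Set α :=
  D ∩ a ⁻¹' D ∩ b ⁻¹' D

variable [MeasurableSpace α] {μ : Measure α} {a b a' b' : α → α} {D : Set α}

theorem measurableSet_doubleReturn (ha : Measurable a) (hb : Measurable b) (hD : MeasurableSet D) :
    MeasurableSet (doubleReturn a b D) :=
  (hD.inter (ha hD)).inter (hb hD)

theorem abs_measureReal_doubleReturn_sub_le [IsFiniteMeasure μ] (ha : Measurable a)
    (hb : Measurable b) (ha' : Measurable a') (hb' : Measurable b') (hD : MeasurableSet D) :
    |μ.real (doubleReturn a b D) - μ.real (doubleReturn a' b' D)| ≤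
      μ.real ((a ⁻¹' D) ∆ (a' ⁻¹' D)) + μ.real ((b ⁻¹' D) ∆ (b' ⁻¹' D)) := by
  have hsub : doubleReturn a b D ∆ doubleReturn a' b' D ⊆
      (a ⁻¹' D) ∆ (a' ⁻¹' D) ∪ (b ⁻¹' D) ∆ (b' ⁻¹' D) := by
    intro x
    simp only [doubleReturn, Set.mem_symmDiff, Set.mem_union, Set.mem_inter_iff]
    tauto
  calc |μ.real (doubleReturn a b D) - μ.real (doubleReturn a' b' D)|
      ≤ μ.real (doubleReturn a b D ∆ doubleReturn a' b' D) :=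
        abs_measureReal_sub_le_measureReal_symmDiff
          (measurableSet_doubleReturn ha hb hD).nullMeasurableSet
          (measurableSet_doubleReturn ha' hb' hD).nullMeasurableSet
    _ ≤ μ.real ((a ⁻¹' D) ∆ (a' ⁻¹' D) ∪ (b ⁻¹' D) ∆ (b' ⁻¹' D)) := measureReal_mono hsub
    _ ≤ _ := measureReal_union_le _ _

/-- A set of measure `c ≤ 1 / 2` has double returns of measure close to `c² ≤ c / 2`. -/
theorem exists_measureReal_pos_lt_of_tendsto_doubleReturn [IsProbabilityMeasure μ] {ι : Type*}
    {l : Filter ι} [l.NeBot] {a b : ι → α → α} (ha : ∀ j, Measurable (a j))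
    (hb : ∀ j, Measurable (b j))
    (h : ∀ B, MeasurableSet B →
      Tendsto (fun j => μ.real (doubleReturn (a j) (b j) B)) l (nhds (μ.real B ^ 2)))
    {A : Set α} (hA : MeasurableSet A) (hA0 : μ A ≠ 0) (hA1 : μ A ≠ 1) {ε : ℝ} (hε : 0 < ε) :
    ∃ B, MeasurableSet B ∧ 0 < μ.real B ∧ μ.real B < ε := by
  have hpos : 0 < μ.real A := by simpa [measureReal_def, ENNReal.toReal_pos_iff, pos_iff_ne_zero]
  have hlt : μ.real A < 1 :=
    measureReal_le_one.lt_of_ne (by simpa [measureReal_def, ENNReal.toReal_eq_one_iff])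
  have hpow : ∀ n : ℕ, ∃ B, MeasurableSet B ∧ 0 < μ.real B ∧ μ.real B ≤ 1 / 2 * (3 / 4) ^ n := by
    intro n
    induction n with
    | zero =>
      rcases le_total (μ.real A) (1 / 2) with hle | hge
      · exact ⟨A, hA, hpos, by simpa using hle⟩
      · refine ⟨Aᶜ, hA.compl, ?_, ?_⟩ <;> rw [probReal_compl_eq_one_sub hA] <;> linarith
    | succ n ih =>
      obtain ⟨B, hB, hB0, hBn⟩ := ih
      have hhalf : μ.real B ≤ 1 / 2 :=
        hBn.trans (mul_le_of_le_one_right (by norm_num) (pow_le_one₀ (by norm_num) (by norm_num)))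
      have hlim := h B hB
      obtain ⟨j, hj0, hj1⟩ := ((hlim.eventually_const_lt (by positivity)).and
        (hlim.eventually_lt_const (u := 3 / 4 * μ.real B) (by nlinarith))).exists
      refine ⟨_, measurableSet_doubleReturn (ha j) (hb j) hB, hj0, ?_⟩
      rw [pow_succ]
      linarith
  obtain ⟨n, hn⟩ := exists_pow_lt_of_lt_one hε (show (3 / 4 : ℝ) < 1 by norm_num)
  obtain ⟨B, hB, hB0, hBn⟩ := hpow n
  exact ⟨B, hB, hB0, by linarith [pow_pos (show (0 : ℝ) < 3 / 4 by norm_num) n]⟩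

end DoubleReturn

section Semiconj

variable {α β : Type*} [MeasurableSpace α] {μ : Measure α} {g : α → α} {g' : β → β} {Φ : α → β}

theorem ae_semiconj_iterate (hg : MeasurePreserving g μ μ) (h : ∀ᵐ p ∂μ, Φ (g p) = g' (Φ p))
    (n : ℕ) : ∀ᵐ p ∂μ, Φ (g^[n] p) = g'^[n] (Φ p) := by
  induction n with
  | zero => simp
  | succ n ih =>
    filter_upwards [hg.quasiMeasurePreserving.ae ih, h] with p hn h1
    rw [Function.iterate_succ_apply, Function.iterate_succ_apply, hn, h1]

theorem ae_semiconj_inverse {g₁ : α → α} {g'₁ : β → β} (hg₁ : MeasurePreserving g₁ μ μ)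
    (hg : Function.RightInverse g₁ g) (hg' : Function.LeftInverse g'₁ g')
    (h : ∀ᵐ p ∂μ, Φ (g p) = g' (Φ p)) : ∀ᵐ p ∂μ, Φ (g₁ p) = g'₁ (Φ p) := by
  filter_upwards [hg₁.quasiMeasurePreserving.ae h] with p hp
  rw [← hg p, hp, hg' (Φ (g₁ p)), hg p]

theorem measureReal_doubleReturn_preimage_of_ae_semiconj [MeasurableSpace β] {ν : Measure β}
    {a b : α → α} {a' b' : β → β} (hΦ : MeasurePreserving Φ μ ν) (ha' : Measurable a')
    (hb' : Measurable b') (ha : ∀ᵐ p ∂μ, Φ (a p) = a' (Φ p))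
    (hb : ∀ᵐ p ∂μ, Φ (b p) = b' (Φ p)) {D : Set β} (hD : MeasurableSet D) :
    μ.real (doubleReturn a b (Φ ⁻¹' D)) = ν.real (doubleReturn a' b' D) := by
  rw [← hΦ.measureReal_preimage (measurableSet_doubleReturn ha' hb' hD).nullMeasurableSet]
  refine measureReal_congr (eventuallyEq_set.2 ?_)
  filter_upwards [ha, hb] with p hap hbp
  simp only [doubleReturn, Set.mem_inter_iff, Set.mem_preimage, hap, hbp]

end Semiconj

section Fiber

variable {X Y : Type*} [MeasurableSpace X] [MeasurableSpace Y] {μ : Measure X} {ν : Measure Y}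
  {D : Set (X × Y)}

theorem measureReal_prod_eq_integral [SFinite μ] [IsFiniteMeasure ν] (hD : MeasurableSet D) :
    (μ.prod ν).real D = ∫ x, ν.real (Prod.mk x ⁻¹' D) ∂μ := by
  simp only [measureReal_def, Measure.prod_apply hD]
  exact (integral_toReal (measurable_measure_prodMk_left hD).aemeasurable
    (Eventually.of_forall fun x => measure_lt_top _ _)).symm

theorem integrable_measureReal_fiber_pow [IsFiniteMeasure μ] [IsProbabilityMeasure ν]
    (hD : MeasurableSet D) (n : ℕ) : Integrable (fun x => ν.real (Prod.mk x ⁻¹' D) ^ n) μ :=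
  Integrable.of_mem_Icc 0 1
    ((measurable_measure_prodMk_left hD).ennreal_toReal.pow_const n).aemeasurable
    (Eventually.of_forall fun _ =>
      ⟨by positivity, pow_le_one₀ measureReal_nonneg measureReal_le_one⟩)

theorem measureReal_prod_add_integral_sq_le [IsFiniteMeasure μ] [IsProbabilityMeasure ν]
    (hD : MeasurableSet D) :
    (μ.prod ν).real D + ∫ x, ν.real (Prod.mk x ⁻¹' D) ^ 2 ∂μ ≤
      4 * ∫ x, (ν.real (Prod.mk x ⁻¹' D) + ν.real (Prod.mk x ⁻¹' D) ^ 2 +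
        2 * ν.real (Prod.mk x ⁻¹' D) ^ 3) / 4 ∂μ := by
  have h1 := by simpa using integrable_measureReal_fiber_pow (μ := μ) (ν := ν) hD 1
  have h2 := integrable_measureReal_fiber_pow (μ := μ) (ν := ν) hD 2
  have h3 := integrable_measureReal_fiber_pow (μ := μ) (ν := ν) hD 3
  rw [measureReal_prod_eq_integral hD, ← integral_add h1 h2, ← integral_const_mul]
  refine integral_mono (h1.add h2) ((((h1.add h2).add (h3.const_mul 2)).div_const 4).const_mul 4)
    fun x => ?_
  have hcube : 0 ≤ ν.real (Prod.mk x ⁻¹' D) ^ 3 := by positivity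
  dsimp only [Pi.add_apply]
  linarith

end Fiber

section ProductLimit

variable {ι X Y : Type*} [MeasurableSpace X] [MeasurableSpace Y] {μ : Measure X} {ν : Measure Y}
  {l : Filter ι} {D : Set (X × Y)}

theorem measureReal_preimage_prodMap_symmDiff [SFinite μ] [SFinite ν] {s : X → X}
    {t : Y → Y} (hs : Measurable s) (ht : MeasurePreserving t ν ν) (hD : MeasurableSet D) :
    (μ.prod ν).real ((Prod.map s t ⁻¹' D) ∆ (Prod.map id t ⁻¹' D)) =
      (μ.prod ν).real (D ∆ (Prod.map s id ⁻¹' D)) := by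
  rw [← ((MeasurePreserving.id μ).prod ht).measureReal_preimage
    (hD.symmDiff ((hs.prodMap measurable_id) hD)).nullMeasurableSet, symmDiff_comm]
  rfl

variable [IsFiniteMeasure μ] [IsFiniteMeasure ν] [l.IsCountablyGenerated]
  {s s' : ι → X → X} {t t' : ι → Y → Y} {L : Set Y → ℝ}

theorem tendsto_measureReal_doubleReturn_prodMap_id (ht : ∀ j, Measurable (t j))
    (ht' : ∀ j, Measurable (t' j))
    (hL : ∀ B, MeasurableSet B →
      Tendsto (fun j => ν.real (doubleReturn (t j) (t' j) B)) l (nhds (L B)))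
    (hD : MeasurableSet D) :
    Tendsto (fun j => (μ.prod ν).real
        (doubleReturn (Prod.map id (t j)) (Prod.map id (t' j)) D)) l
      (nhds (∫ x, L (Prod.mk x ⁻¹' D) ∂μ)) := by
  have hmeas : ∀ j, MeasurableSet (doubleReturn (Prod.map id (t j)) (Prod.map id (t' j)) D) :=
    fun j => measurableSet_doubleReturn (measurable_id.prodMap (ht j))
      (measurable_id.prodMap (ht' j)) hD
  simp only [measureReal_prod_eq_integral (hmeas _)]
  refine tendsto_integral_filter_of_dominated_convergence (fun _ => ν.real Set.univ)
    (Eventually.of_forall fun j =>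
      (measurable_measure_prodMk_left (hmeas j)).ennreal_toReal.aestronglyMeasurable)
    (Eventually.of_forall fun j => Eventually.of_forall fun x => ?_) (integrable_const _)
    (Eventually.of_forall fun x => hL _ (measurable_prodMk_left hD))
  rw [Real.norm_of_nonneg measureReal_nonneg]
  exact measureReal_mono (Set.subset_univ _)

theorem tendsto_measureReal_doubleReturn_prodMap (hs : ∀ j, MeasurePreserving (s j) μ μ)
    (hs' : ∀ j, MeasurePreserving (s' j) μ μ) (ht : ∀ j, MeasurePreserving (t j) ν ν)
    (ht' : ∀ j, MeasurePreserving (t' j) ν ν) (hsid : TendstoIdWeakly μ s l)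
    (hsid' : TendstoIdWeakly μ s' l)
    (hL : ∀ B, MeasurableSet B →
      Tendsto (fun j => ν.real (doubleReturn (t j) (t' j) B)) l (nhds (L B)))
    (hD : MeasurableSet D) :
    Tendsto (fun j => (μ.prod ν).real
        (doubleReturn (Prod.map (s j) (t j)) (Prod.map (s' j) (t' j)) D)) l
      (nhds (∫ x, L (Prod.mk x ⁻¹' D) ∂μ)) := by
  have hlim := tendsto_measureReal_doubleReturn_prodMap_id (μ := μ) (fun j => (ht j).measurable)
    (fun j => (ht' j).measurable) hL hD
  have herr := (hsid.prodMap_id (ν := ν) hs D hD).add (hsid'.prodMap_id (ν := ν) hs' D hD)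
  rw [add_zero] at herr
  refine (tendsto_iff_of_dist (squeeze_zero (fun _ => dist_nonneg) (fun j => ?_) herr)).2 hlim
  rw [Real.dist_eq, ← measureReal_preimage_prodMap_symmDiff (hs j).measurable (ht j) hD,
    ← measureReal_preimage_prodMap_symmDiff (hs' j).measurable (ht' j) hD]
  exact abs_measureReal_doubleReturn_sub_le ((hs j).prod (ht j)).measurable
    ((hs' j).prod (ht' j)).measurable (measurable_id.prodMap (ht j).measurable)
    (measurable_id.prodMap (ht' j).measurable) hD

end ProductLimit

section Asymmetry

variable {ι X Y : Type*} [MeasurableSpace X] [MeasurableSpace Y] {μ : Measure X} {ν : Measure Y}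
  {l : Filter ι} {m : ι → ℕ} {k : ℕ} {S S' : X → X} {T T' : Y → Y} {Φ : X × Y → X × Y} {A : Set Y}

theorem integral_fiber_eq_of_ae_semiconj [l.NeBot] [l.IsCountablyGenerated]
    [IsProbabilityMeasure μ] [IsFiniteMeasure ν]
    (hS : MeasurePreserving S μ μ) (hS' : MeasurePreserving S' μ μ)
    (hT : MeasurePreserving T ν ν) (hT' : MeasurePreserving T' ν ν)
    (hSid : TendstoIdWeakly μ (fun j => S^[m j]) l)
    (hSid' : TendstoIdWeakly μ (fun j => S'^[m j]) l) {L L' : Set Y → ℝ}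
    (hL : ∀ B, MeasurableSet B →
      Tendsto (fun j => ν.real (doubleReturn T^[m j] T^[k * m j] B)) l (nhds (L B)))
    (hL' : ∀ B, MeasurableSet B →
      Tendsto (fun j => ν.real (doubleReturn T'^[m j] T'^[k * m j] B)) l (nhds (L' B)))
    (hΦ : MeasurePreserving Φ (μ.prod ν) (μ.prod ν))
    (hconj : ∀ᵐ p ∂μ.prod ν, Φ (Prod.map S T p) = Prod.map S' T' (Φ p)) (hA : MeasurableSet A) :
    ∫ x, L (Prod.mk x ⁻¹' (Φ ⁻¹' (Set.univ ×ˢ A))) ∂μ = L' A := by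
  have hC : MeasurableSet ((Set.univ : Set X) ×ˢ A) := MeasurableSet.univ.prod hA
  have hlim := tendsto_measureReal_doubleReturn_prodMap (fun j => hS.iterate _)
    (fun j => hS.iterate _) (fun j => hT.iterate _) (fun j => hT.iterate _) hSid
    (hSid.iterate_mul hS k) hL (hΦ.measurable hC)
  have hlim' := tendsto_measureReal_doubleReturn_prodMap (fun j => hS'.iterate _)
    (fun j => hS'.iterate _) (fun j => hT'.iterate _) (fun j => hT'.iterate _) hSid'
    (hSid'.iterate_mul hS' k) hL' hC
  have hR' : Measurable (Prod.map S' T') := hS'.measurable.prodMap hT'.measurable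
  have hiter := ae_semiconj_iterate (hS.prod hT) hconj
  simp only [← Prod.map_iterate] at hlim hlim'
  simp only [measureReal_doubleReturn_preimage_of_ae_semiconj hΦ (hR'.iterate _) (hR'.iterate _)
    (hiter _) (hiter _) hC] at hlim
  simpa using tendsto_nhds_unique hlim hlim'

theorem measureReal_add_cubic_le_sq_of_ae_semiconj [l.NeBot] [l.IsCountablyGenerated]
    [IsProbabilityMeasure μ] [IsProbabilityMeasure ν]
    (hS : MeasurePreserving S μ μ) (hS' : MeasurePreserving S' μ μ)
    (hT : MeasurePreserving T ν ν) (hT' : MeasurePreserving T' ν ν)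
    (hSid : TendstoIdWeakly μ (fun j => S^[m j]) l)
    (hSid' : TendstoIdWeakly μ (fun j => S'^[m j]) l)
    (hL : ∀ B, MeasurableSet B →
      Tendsto (fun j => ν.real (doubleReturn T^[m j] T^[k * m j] B)) l (nhds (ν.real B ^ 2)))
    (hL' : ∀ B, MeasurableSet B →
      Tendsto (fun j => ν.real (doubleReturn T'^[m j] T'^[k * m j] B)) l
        (nhds ((ν.real B + ν.real B ^ 2 + 2 * ν.real B ^ 3) / 4)))
    (hΦ : MeasurePreserving Φ (μ.prod ν) (μ.prod ν))
    (hconj : ∀ᵐ p ∂μ.prod ν, Φ (Prod.map S T p) = Prod.map S' T' (Φ p))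
    (hconj' : ∀ᵐ p ∂μ.prod ν, Φ (Prod.map S' T' p) = Prod.map S T (Φ p)) (hA : MeasurableSet A) :
    ν.real A + (ν.real A + ν.real A ^ 2 + 2 * ν.real A ^ 3) / 4 ≤ 4 * ν.real A ^ 2 := by
  have hC : MeasurableSet ((Set.univ : Set X) ×ˢ A) := MeasurableSet.univ.prod hA
  have hmeas : (μ.prod ν).real (Φ ⁻¹' (Set.univ ×ˢ A)) = ν.real A := by
    rw [hΦ.measureReal_preimage hC.nullMeasurableSet, measureReal_prod_prod, probReal_univ, one_mul]
  have hsq := integral_fiber_eq_of_ae_semiconj hS hS' hT hT' hSid hSid' hL hL' hΦ hconj hA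
  have hcubic := integral_fiber_eq_of_ae_semiconj hS' hS hT' hT hSid' hSid hL' hL hΦ hconj' hA
  have hle := measureReal_prod_add_integral_sq_le (μ := μ) (ν := ν) (hΦ.measurable hC)
  rwa [hmeas, hsq, hcubic] at hle

end Asymmetry

section Automorphism

variable {α : Type*} [MeasurableSpace α]

theorem image_iterate_eq_preimage_symm_iterate (e : α ≃ᵐ α) (n : ℕ) (A : Set α) :
    (⇑e)^[n] '' A = (⇑e.symm)^[n] ⁻¹' A :=
  congrFun (Set.image_eq_preimage_of_inverse
    (Function.LeftInverse.iterate e.symm_apply_apply n)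
    (Function.LeftInverse.iterate e.apply_symm_apply n)) A

theorem inter_image_iterate_eq_doubleReturn (e : α ≃ᵐ α) (m n : ℕ) (A : Set α) :
    A ∩ (⇑e)^[m] '' A ∩ (⇑e)^[n] '' A = doubleReturn (⇑e.symm)^[m] (⇑e.symm)^[n] A := by
  rw [image_iterate_eq_preimage_symm_iterate, image_iterate_eq_preimage_symm_iterate, doubleReturn]

theorem tendstoIdWeakly_symm_iterate {ι : Type*} {μ : Measure α} {S : α ≃ᵐ α} {m : ι → ℕ}
    {l : Filter ι}
    (h : ∀ A, MeasurableSet A → Tendsto (fun j => μ (A ∆ ((⇑S)^[m j] '' A))) l (nhds 0)) :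
    TendstoIdWeakly μ (fun j => (⇑S.symm)^[m j]) l := by
  intro A hA
  simpa [image_iterate_eq_preimage_symm_iterate, Function.comp_def, measureReal_def] using
    (ENNReal.tendsto_toReal ENNReal.zero_ne_top).comp (h A hA)

end Automorphism

theorem product_asymmetric_general
    {ι X Y : Type*} [MeasurableSpace X] [MeasurableSpace Y]
    (μ : Measure X) (ν : Measure Y) [IsProbabilityMeasure μ] [IsProbabilityMeasure ν]
    (S : X ≃ᵐ X) (hS : MeasurePreserving S μ μ)
    (T : Y ≃ᵐ Y) (hT : MeasurePreserving T ν ν)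
    {l : Filter ι} [l.NeBot] [l.IsCountablyGenerated] (m : ι → ℕ)
    (hSrigid : ∀ A : Set X, MeasurableSet A →
      Tendsto (fun j => μ (A ∆ ((⇑S)^[m j] '' A))) l (nhds 0))
    (hTmix : ∀ B : Set Y, MeasurableSet B →
      Tendsto (fun j => 4 * (ν (B ∩ (⇑T)^[m j] '' B ∩ (⇑T)^[3 * m j] '' B)).toReal) l
        (nhds ((ν B).toReal + (ν B).toReal ^ 2 + 2 * (ν B).toReal ^ 3)))
    (hTinv : ∀ B : Set Y, MeasurableSet B →
      Tendsto (fun j =>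
          (ν (B ∩ (⇑T.symm)^[m j] '' B ∩ (⇑T.symm)^[3 * m j] '' B)).toReal) l
        (nhds ((ν B).toReal ^ 2)))
    (A₀ : Set Y) (hA₀ : MeasurableSet A₀) (hA₀_zero : ν A₀ ≠ 0) (hA₀_one : ν A₀ ≠ 1) :
    ¬ ∃ Φ : X × Y → X × Y, MeasurePreserving Φ (μ.prod ν) (μ.prod ν) ∧
        ∀ᵐ p ∂(μ.prod ν), Φ (S.prodCongr T p) = (S.prodCongr T).symm (Φ p) := by
  rintro ⟨Φ, hΦ, hconj⟩
  have hS' : MeasurePreserving S.symm μ μ := hS.symm S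
  have hT' : MeasurePreserving T.symm ν ν := hT.symm T
  have hSid' : TendstoIdWeakly μ (fun j => (⇑S.symm)^[m j]) l :=
    tendstoIdWeakly_symm_iterate hSrigid
  have hSid : TendstoIdWeakly μ (fun j => (⇑S)^[m j]) l :=
    hSid'.of_leftInverse (fun j => hS.iterate _) (fun j => hS'.measurable.iterate _)
      fun j => Function.LeftInverse.iterate S.symm_apply_apply _
  have hL : ∀ B, MeasurableSet B → Tendsto
      (fun j => ν.real (doubleReturn (⇑T)^[m j] (⇑T)^[3 * m j] B)) l (nhds (ν.real B ^ 2)) := by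
    simpa only [inter_image_iterate_eq_doubleReturn, MeasurableEquiv.symm_symm, measureReal_def]
      using hTinv
  have hL' : ∀ B, MeasurableSet B → Tendsto
      (fun j => ν.real (doubleReturn (⇑T.symm)^[m j] (⇑T.symm)^[3 * m j] B)) l
      (nhds ((ν.real B + ν.real B ^ 2 + 2 * ν.real B ^ 3) / 4)) := fun B hB => by
    simpa [inter_image_iterate_eq_doubleReturn, measureReal_def] using (hTmix B hB).div_const 4
  obtain ⟨A, hA, hA_pos, hA_lt⟩ := exists_measureReal_pos_lt_of_tendsto_doubleReturn
    (fun j => hT.measurable.iterate _) (fun j => hT.measurable.iterate _) hL hA₀ hA₀_zero hA₀_one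
    (show (0 : ℝ) < 1 / 3 by norm_num)
  have hconj' : ∀ᵐ p ∂μ.prod ν, Φ (Prod.map S.symm T.symm p) = Prod.map S T (Φ p) :=
    ae_semiconj_inverse (hS'.prod hT') (S.prodCongr T).apply_symm_apply
      (S.prodCongr T).apply_symm_apply hconj
  have hle := measureReal_add_cubic_le_sq_of_ae_semiconj hS hS' hT hT' hSid hSid' hL hL' hΦ hconj
    hconj' hA
  nlinarith [mul_pos hA_pos (sub_pos.2 hA_lt), pow_pos hA_pos 3]

/-- If `S` is rigid along `(m_j)`, and `T` satisfies
`4 ν(B ∩ T^{m_j} B ∩ T^{3 m_j} B) → ν(B) + ν(B)² + 2 ν(B)³` as well as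
`ν(B ∩ T^{-m_j} B ∩ T^{-3 m_j} B) → ν(B)²`, and there is a measurable set of `ν`-measure `1/4`,
then the product automorphism `R = S × T` is not conjugate to its inverse. -/
theorem product_asymmetric
    {X Y : Type*} [MeasurableSpace X] [MeasurableSpace Y]
    (μ : Measure X) (ν : Measure Y) [IsProbabilityMeasure μ] [IsProbabilityMeasure ν]
    (S : X ≃ᵐ X) (hS : MeasurePreserving S μ μ)
    (T : Y ≃ᵐ Y) (hT : MeasurePreserving T ν ν)
    (m : ℕ → ℕ) (hm : StrictMono m)
    (hSrigid : ∀ A : Set X, MeasurableSet A →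
      Tendsto (fun j => μ (A ∆ ((⇑S)^[m j] '' A))) atTop (nhds 0))
    (hTmix : ∀ B : Set Y, MeasurableSet B →
      Tendsto (fun j => 4 * (ν (B ∩ (⇑T)^[m j] '' B ∩ (⇑T)^[3 * m j] '' B)).toReal) atTop
        (nhds ((ν B).toReal + (ν B).toReal ^ 2 + 2 * (ν B).toReal ^ 3)))
    (hTinv : ∀ B : Set Y, MeasurableSet B →
      Tendsto (fun j =>
          (ν (B ∩ (⇑T.symm)^[m j] '' B ∩ (⇑T.symm)^[3 * m j] '' B)).toReal) atTop
        (nhds ((ν B).toReal ^ 2)))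
    (A₀ : Set Y) (hA₀ : MeasurableSet A₀) (hA₀meas : ν A₀ = 1 / 4) :
    ¬ ∃ Φ : (X × Y) ≃ᵐ (X × Y), MeasurePreserving Φ (μ.prod ν) (μ.prod ν) ∧
        ∀ᵐ p ∂(μ.prod ν), Φ (S.prodCongr T p) = (S.prodCongr T).symm (Φ p) :=
  fun ⟨Φ, hΦ, hconj⟩ => product_asymmetric_general μ ν S hS T hT m hSrigid hTmix hTinv A₀ hA₀
    (by simp [hA₀meas]) (by simp [hA₀meas]) ⟨Φ, hΦ, hconj⟩
end
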